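/- Let A, B, A₃, …, Aₙ be n × n complex Hermitian matrices with A, A₃, …, Aₙ positive definite and B arbitrary Hermitian. Then D(A, B, A₃, …, Aₙ)² ≥ D(A, A, A₃, …, Aₙ) · D(B, B, A₃, …, Aₙ), with equality if and only if B = λA for some real number λ. -/

import Mathlib

open scoped ComplexOrder

/-- The mixed discriminant of `n` complex `n × n` matrices. -/
noncomputable def mixedDisc {n : ℕ} (A : Fin n → Matrix (Fin n) (Fin n) ℂ) : ℂ :=
  (n.factorial : ℂ)⁻¹ * ∑ σ : Equiv.Perm (Fin n), (Matrix.of fun i j => A (σ j) i j).det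

/-!
Matrices with positive definite imaginary part form a matrix analogue of the upper half plane on
which the determinant does not vanish. Polarizing the determinant in positive definite directions
amounts to differentiating polynomials all of whose roots lie in the open lower half plane, so by
Gauss–Lucas the form `D(Z, Z, A₃, …, Aₙ)` does not vanish there either. Applied to `Z = X + iτA`
with `D(A, X, …) = 0`, this says that `D(·, ·, A₃, …, Aₙ)` is negative semidefinite on the
orthogonal complement of `A`, and the inequality is the reverse Cauchy–Schwarz inequality.

In the equality case `B - λA` lies in the kernel of the form, so it remains to see that the form is
nondegenerate. If `X` is in the kernel, then `D(X, X, …, Z, …) ≤ 0` for every positive definite `Z`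
in place of `Aᵢ`. This is linear in `Z` and vanishes at the interior point `Z = Aᵢ` of the cone, so
it vanishes identically. Hence the kernel does not change when `Aᵢ` is replaced, and taking all the
`Aᵢ` equal to `S` gives `tr(adj(S) X) = 0` for every positive definite `S`, which forces `X = 0`.
-/

open Matrix Polynomial
open scoped ComplexStarModule

section Lorentzian

variable {V : Type*} [AddCommGroup V] [Module ℝ V] {β : LinearMap.BilinForm ℝ V} {a e : V}

/-- A bilinear form that is positive at `a` and negative semidefinite on the orthogonal
complement of `a`. Degenerate forms are allowed. -/
structure IsLorentzianAt (β : LinearMap.BilinForm ℝ V) (a : V) : Prop where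
  apply_self_pos : 0 < β a a
  apply_self_nonpos : ∀ x, β a x = 0 → β x x ≤ 0

theorem exists_eq_smul_add_of_apply_self_ne_zero (ha : β a a ≠ 0) (b : V) :
    ∃ (l : ℝ) (z : V), b = l • a + z ∧ β a z = 0 :=
  ⟨β a b / β a a, b - (β a b / β a a) • a, by simp, by simp [ha]⟩

theorem apply_sq_sub_mul_of_eq_smul_add (hβ : β.IsSymm) {l : ℝ} {b z : V} (hb : b = l • a + z)
    (hz : β a z = 0) : β a b ^ 2 - β a a * β b b = -(β a a * β z z) := by
  have hz' : β z a = 0 := by rw [hβ.eq_iff.1 hz]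
  simp only [hb, map_add, map_smul, LinearMap.add_apply, LinearMap.smul_apply, smul_eq_mul, hz,
    hz']
  ring

namespace IsLorentzianAt

theorem of_apply_self_pos (he : IsLorentzianAt β e) (hβ : β.IsSymm) (ha : 0 < β a a) :
    IsLorentzianAt β a := by
  refine ⟨ha, fun x hx => ?_⟩
  by_contra! hxx
  -- If `β x x > 0`, then `β` is positive definite on the span of `a` and `x`, which meets `eᗮ`.
  have hx' : β x a = 0 := hβ.eq_iff.1 hx
  have hy : β (β e x • a - β e a • x) (β e x • a - β e a • x) ≤ 0 :=
    he.apply_self_nonpos _ (by simp [mul_comm])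
  simp only [map_sub, map_smul, LinearMap.sub_apply, LinearMap.smul_apply, smul_eq_mul, hx,
    hx'] at hy
  have hea : β e a = 0 := by
    by_contra hne
    have := mul_pos (pow_two_pos_of_ne_zero hne) hxx
    nlinarith [mul_nonneg (sq_nonneg (β e x)) ha.le]
  exact ha.not_ge (he.apply_self_nonpos a hea)

variable (h : IsLorentzianAt β a) (hβ : β.IsSymm)
include h hβ

theorem mul_apply_self_le_sq (b : V) : β a a * β b b ≤ β a b ^ 2 := by
  obtain ⟨l, z, hb, hz⟩ := exists_eq_smul_add_of_apply_self_ne_zero h.apply_self_pos.ne' b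
  have := apply_sq_sub_mul_of_eq_smul_add hβ hb hz
  have := mul_nonpos_of_nonneg_of_nonpos h.apply_self_pos.le (h.apply_self_nonpos z hz)
  linarith

theorem mem_ker_of_apply_self_eq_zero {x : V} (hax : β a x = 0) (hxx : β x x = 0) :
    x ∈ LinearMap.ker β := by
  refine LinearMap.ext fun y => ?_
  obtain ⟨l, z, rfl, hz⟩ := exists_eq_smul_add_of_apply_self_ne_zero h.apply_self_pos.ne' y
  have hxa : β x a = 0 := hβ.eq_iff.1 hax
  have hzx : β z x = β x z := hβ.eq z x
  -- `z + t • x` stays orthogonal to `a`, and `β` is affine along it with slope `2 * β x z`.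
  have hline (t : ℝ) : β z z + t * (2 * β x z) ≤ 0 := by
    have := h.apply_self_nonpos (z + t • x) (by simp [hz, hax])
    simp only [map_add, map_smul, LinearMap.add_apply, LinearMap.smul_apply, smul_eq_mul, hxx,
      hzx] at this
    linarith
  have hxz : β x z = 0 := by
    by_contra hne
    have := hline ((1 - β z z) / (2 * β x z))
    rw [div_mul_cancel₀ _ (by simpa using hne)] at this
    linarith
  simp [hxa, hxz]

theorem sq_eq_mul_apply_self_iff (hker : LinearMap.ker β = ⊥) {b : V} :
    β a b ^ 2 = β a a * β b b ↔ ∃ l : ℝ, b = l • a := by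
  constructor
  · intro heq
    obtain ⟨l, z, hb, hz⟩ := exists_eq_smul_add_of_apply_self_ne_zero h.apply_self_pos.ne' b
    have hzz : β z z = 0 := by
      have := apply_sq_sub_mul_of_eq_smul_add hβ hb hz
      simpa [heq, h.apply_self_pos.ne'] using this
    have hz0 : z ∈ LinearMap.ker β := h.mem_ker_of_apply_self_eq_zero hβ hz hzz
    rw [hker, Submodule.mem_bot] at hz0
    exact ⟨l, by rw [hb, hz0, add_zero]⟩
  · rintro ⟨l, rfl⟩
    simp only [map_smul, LinearMap.smul_apply, smul_eq_mul]
    ring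

end IsLorentzianAt

end Lorentzian

section Stability

theorem eval_derivative_ne_zero_of_forall_im_nonneg {p : ℂ[X]} (hdeg : 0 < p.degree)
    (hp : ∀ t : ℂ, 0 ≤ t.im → p.eval t ≠ 0) {t : ℂ} (ht : 0 ≤ t.im) :
    p.derivative.eval t ≠ 0 := by
  intro h
  have hd : p.derivative ≠ 0 := fun h0 =>
    (natDegree_pos_iff_degree_pos.2 hdeg).ne' (derivative_eq_zero.1 h0)
  have hroots : p.rootSet ℂ ⊆ {z | z.im < 0} := fun z hz => by
    contrapose! hz
    simpa [mem_rootSet] using fun _ => hp z (not_lt.1 hz)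
  refine ht.not_gt (convexHull_min hroots (convex_halfSpace_im_lt 0)
    (rootSet_derivative_subset_convexHull_rootSet hdeg ?_))
  simpa [mem_rootSet, hd] using h

section LinePolynomial

variable {ι R M : Type*} [CommSemiring R] [AddCommMonoid M] [Module R M] [DecidableEq ι]
  (f : MultilinearMap R (fun _ : ι => M) R) (U V : ι → M) (r : Finset ι)

/-- The polynomial `t ↦ f (U + t • V)` in which only the coordinates in `r` move; see
`eval_linePolynomial`. -/
noncomputable def linePolynomial : R[X] :=
  ∑ s ∈ r.powerset, monomial s.card (f (s.piecewise V U))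

theorem eval_linePolynomial (t : R) :
    (linePolynomial f U V r).eval t = f (r.piecewise (t • V + U) U) := by
  rw [linePolynomial, f.map_piecewise_add, eval_finsetSum]
  refine Finset.sum_congr rfl fun s _ => ?_
  have hsmul : s.piecewise (t • V) U =
      s.piecewise (fun i => t • s.piecewise V U i) (s.piecewise V U) := by
    ext i
    by_cases h : i ∈ s <;> simp [h]
  rw [hsmul, f.map_piecewise_smul (fun _ => t), eval_monomial]
  simp [mul_comm]

theorem coeff_one_linePolynomial :
    (linePolynomial f U V r).coeff 1 = ∑ i ∈ r, f (Function.update U i (V i)) := by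
  simp only [linePolynomial, finsetSum_coeff, coeff_monomial]
  rw [← Finset.sum_filter, ← Finset.powersetCard_eq_filter, Finset.powersetCard_one,
    Finset.sum_map]
  simp [Finset.piecewise_singleton]

theorem coeff_card_linePolynomial :
    (linePolynomial f U V r).coeff r.card = f (r.piecewise V U) := by
  simp only [linePolynomial, finsetSum_coeff, coeff_monomial]
  rw [← Finset.sum_filter, ← Finset.powersetCard_eq_filter, Finset.powersetCard_self,
    Finset.sum_singleton]

end LinePolynomial

theorem update_comp_swap_of_apply_eq {ι M : Type*} [DecidableEq ι] {U : ι → M} {i j : ι}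
    (h : U i = U j) (x : M) : Function.update U i x ∘ Equiv.swap i j = Function.update U j x := by
  ext k
  simp only [Function.comp_apply, Function.update_apply, Equiv.swap_apply_def]
  grind

section SymmetricMultilinearMap

variable {ι M : Type*} [DecidableEq ι] [AddCommGroup M] [Module ℂ M]
  {f : MultilinearMap ℂ (fun _ : ι => M) ℂ}

theorem multilinearMap_update_ne_zero (hf : ∀ (σ : Equiv.Perm ι) (U : ι → M), f (U ∘ σ) = f U)
    {U : ι → M} {r : Finset ι} {a : ι} (ha : a ∈ r) (hU : ∀ i ∈ r, U i = U a) {x : M}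
    (hline : ∀ t : ℂ, 0 ≤ t.im → f (r.piecewise (fun i => t • x + U i) U) ≠ 0)
    (hx : f (r.piecewise (fun _ => x) U) ≠ 0) : f (Function.update U a x) ≠ 0 := by
  set p := linePolynomial f U (fun _ => x) r with hp
  have heval (t : ℂ) (ht : 0 ≤ t.im) : p.eval t ≠ 0 := by
    rw [hp, eval_linePolynomial]
    exact hline t ht
  have hcoeff : p.coeff 1 = r.card • f (Function.update U a x) := by
    rw [hp, coeff_one_linePolynomial]
    refine Finset.sum_eq_card_nsmul fun i hi => ?_
    rw [← update_comp_swap_of_apply_eq (hU i hi), hf]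
  have hdeg : 0 < p.degree :=
    (Nat.cast_pos.2 (Finset.card_pos.2 ⟨a, ha⟩)).trans_le <|
      le_degree_of_ne_zero (by rwa [hp, coeff_card_linePolynomial])
  have hderiv := eval_derivative_ne_zero_of_forall_im_nonneg hdeg heval (t := 0) le_rfl
  rw [← coeff_zero_eq_eval_zero, coeff_derivative, zero_add, Nat.cast_zero, zero_add, mul_one,
    hcoeff] at hderiv
  exact right_ne_zero_of_smul hderiv

theorem multilinearMap_piecewise_ne_zero [Finite ι] {T : Set M} {P : ι → M}
    (hf : ∀ (σ : Equiv.Perm ι) (U : ι → M), f (U ∘ σ) = f U)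
    (hT : ∀ Z ∈ T, f (fun _ => Z) ≠ 0)
    (hTP : ∀ i, ∀ Z ∈ T, ∀ t : ℂ, 0 ≤ t.im → t • P i + Z ∈ T)
    (hP : ∀ i, ∃ c : ℂ, c • P i ∈ T) (s : Finset ι) {Z : M} (hZ : Z ∈ T) :
    f (s.piecewise P fun _ => Z) ≠ 0 := by
  cases nonempty_fintype ι
  induction s using Finset.induction_on generalizing Z with
  | empty => simpa using hT Z hZ
  | insert a s ha ih =>
    set U : ι → M := s.piecewise P fun _ => Z with hU
    have hUc (i : ι) (hi : i ∈ sᶜ) : U i = U a := by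
      simp [hU, ha, Finset.mem_compl.1 hi]
    rw [Finset.piecewise_insert]
    refine multilinearMap_update_ne_zero hf (Finset.mem_compl.2 ha) hUc (fun t ht => ?_) ?_
    · convert ih (hTP a Z hZ t ht) using 2
      ext i
      by_cases hi : i ∈ s <;> simp [hU, hi]
    · obtain ⟨c, hc⟩ := hP a
      have hpiece : (s.piecewise P fun _ => c • P a) =
          sᶜ.piecewise (fun i => c • sᶜ.piecewise (fun _ => P a) U i)
            (sᶜ.piecewise (fun _ => P a) U) := by
        ext i
        by_cases hi : i ∈ s <;> simp [hU, hi]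
      have hne := ih hc
      rw [hpiece, f.map_piecewise_smul (fun _ => c)] at hne
      exact right_ne_zero_of_smul hne

end SymmetricMultilinearMap

end Stability

section Matrix

/-- The real vector space of Hermitian complex matrices. -/
abbrev HermitianMatrix (m : Type*) := selfAdjoint (Matrix m m ℂ)

/-- The matrices with positive definite imaginary part `(Z - Zᴴ) / 2i`, a matrix analogue of the
upper half plane. -/
def upperHalfSpace (m : Type*) : Set (Matrix m m ℂ) :=
  {Z | (ℑ Z : Matrix m m ℂ).PosDef}

variable {m : Type*}

theorem add_I_smul_mem_upperHalfSpace {H K : Matrix m m ℂ} (hH : H.IsHermitian)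
    (hK : K.PosDef) : H + Complex.I • K ∈ upperHalfSpace m := by
  simpa [upperHalfSpace, imaginaryPart_I_smul, hK.isHermitian.isSelfAdjoint.coe_realPart,
    hH.isSelfAdjoint.imaginaryPart] using hK

theorem smul_add_mem_upperHalfSpace {P Z : Matrix m m ℂ} (hP : P.PosDef)
    (hZ : Z ∈ upperHalfSpace m) {t : ℂ} (ht : 0 ≤ t.im) : t • P + Z ∈ upperHalfSpace m := by
  have him : (ℑ (t • P + Z) : Matrix m m ℂ) = t.im • P + ℑ Z := by
    simp [imaginaryPart_smul, hP.isHermitian.isSelfAdjoint.coe_realPart,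
      hP.isHermitian.isSelfAdjoint.imaginaryPart]
  exact (him ▸ PosDef.posSemidef_add (hP.posSemidef.smul ht) hZ : (ℑ (t • P + Z)).1.PosDef)

theorem det_ne_zero_of_mem_upperHalfSpace [Fintype m] [DecidableEq m] {Z : Matrix m m ℂ}
    (hZ : Z ∈ upperHalfSpace m) : Z.det ≠ 0 := by
  intro h
  obtain ⟨v, hv, hZv⟩ := exists_mulVec_eq_zero_iff.2 h
  have him : (star v ⬝ᵥ (Z *ᵥ v)).im = (star v ⬝ᵥ ((ℑ Z : Matrix m m ℂ) *ᵥ v)).re := by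
    conv_lhs => rw [← realPart_add_I_smul_imaginaryPart Z]
    have hre : (star v ⬝ᵥ ((ℜ Z : Matrix m m ℂ) *ᵥ v)).im = 0 :=
      IsHermitian.im_star_dotProduct_mulVec_self (ℜ Z).2 v
    rw [add_mulVec, smul_mulVec, dotProduct_add, dotProduct_smul]
    simp [hre]
  refine (Complex.pos_iff.1 (PosDef.dotProduct_mulVec_pos hZ hv)).1.ne ?_
  rw [← him, hZv, dotProduct_zero, Complex.zero_im]

open scoped MatrixOrder Matrix.Norms.L2Operator in
theorem exists_smul_add_posDef [Finite m] {P H : Matrix m m ℂ} (hP : P.PosDef)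
    (hH : H.IsHermitian) : ∃ c : ℝ, (c • P + H).PosDef := by
  classical
  cases nonempty_fintype m
  rcases isEmpty_or_nonempty m with _ | _
  · exact ⟨1, (Subsingleton.elim _ _ : P = (1 : ℝ) • P + H) ▸ hP⟩
  obtain ⟨r, hr, hrP⟩ := (CFC.exists_pos_algebraMap_le_iff (A := Matrix m m ℂ) (a := P) hP.1).2
    fun x hx => hP.isStrictlyPositive.spectrum_pos hx
  have hHle : -H ≤ ‖-H‖ • (1 : Matrix m m ℂ) := by
    simpa [Algebra.algebraMap_eq_smul_one] using IsSelfAdjoint.le_algebraMap_norm_self hH.neg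
  refine ⟨(‖-H‖ + 1) / r, (PosDef.one.isStrictlyPositive.of_le ?_).posDef⟩
  calc (1 : Matrix m m ℂ)
      = ((‖-H‖ + 1) / r) • algebraMap ℝ (Matrix m m ℂ) r - ‖-H‖ • (1 : Matrix m m ℂ) := by
        rw [Algebra.algebraMap_eq_smul_one, smul_smul, div_mul_cancel₀ _ hr.ne']
        module
    _ ≤ ((‖-H‖ + 1) / r) • P - -H := by gcongr
    _ = ((‖-H‖ + 1) / r) • P + H := sub_neg_eq_add _ _

theorem linearMap_eq_zero_of_forall_posDef_nonpos [Finite m] {g : HermitianMatrix m →ₗ[ℝ] ℝ}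
    (hg : ∀ X : HermitianMatrix m, X.1.PosDef → g X ≤ 0)
    {P : HermitianMatrix m} (hP : P.1.PosDef) (hgP : g P = 0) : g = 0 := by
  have hle (H : HermitianMatrix m) : g H ≤ 0 := by
    obtain ⟨c, hc⟩ := exists_smul_add_posDef hP H.2
    simpa [hgP] using hg (c • P + H) hc
  exact LinearMap.ext fun H => le_antisymm (hle H) (by simpa using hle (-H))

theorem eq_zero_of_forall_posDef_trace_mul_eq_zero [Fintype m] {B : Matrix m m ℂ}
    (hB : B.IsHermitian) (h : ∀ S : Matrix m m ℂ, S.PosDef → (S * B).trace = 0) : B = 0 := by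
  classical
  obtain ⟨c, hc⟩ := exists_smul_add_posDef PosDef.one hB
  have htr : B.trace = 0 := by simpa using h 1 PosDef.one
  rw [← trace_conjTranspose_mul_self_eq_zero_iff, hB.eq]
  simpa [add_mul, htr] using h _ hc

theorem eq_zero_of_forall_posDef_trace_adjugate_mul_eq_zero [Fintype m] [DecidableEq m]
    {B : Matrix m m ℂ} (hB : B.IsHermitian)
    (h : ∀ T : Matrix m m ℂ, T.PosDef → (T.adjugate * B).trace = 0) : B = 0 := by
  refine eq_zero_of_forall_posDef_trace_mul_eq_zero hB fun S hS => ?_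
  have hadj : S⁻¹.adjugate = S⁻¹.det • S := by
    rw [← nonsing_inv_mul_cancel_right S S⁻¹.adjugate ((isUnit_iff_isUnit_det _).1 hS.isUnit),
      adjugate_mul, smul_mul_assoc, one_mul]
  simpa only [hadj, smul_mul_assoc, trace_smul, smul_eq_zero, hS.inv.det_pos.ne',
    false_or] using h S⁻¹ hS.inv

end Matrix

section MixedDiscriminant

variable {n : ℕ} {P : Fin n → Matrix (Fin n) (Fin n) ℂ}

/-- The mixed discriminant as a multilinear map; see `mixedDiscMultilinear_apply`. -/
noncomputable def mixedDiscMultilinear (n : ℕ) :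
    MultilinearMap ℂ (fun _ : Fin n => Matrix (Fin n) (Fin n) ℂ) ℂ :=
  (n.factorial : ℂ)⁻¹ • ∑ σ : Equiv.Perm (Fin n),
    ((detRowAlternating (R := ℂ) (n := Fin n)).toMultilinearMap.compLinearMap
      fun j => (LinearMap.proj j : (Fin n → Fin n → ℂ) →ₗ[ℂ] _) ∘ₗ
        (transposeLinearEquiv (Fin n) (Fin n) ℂ ℂ).toLinearMap).domDomCongr σ

theorem mixedDiscMultilinear_apply (A : Fin n → Matrix (Fin n) (Fin n) ℂ) :
    mixedDiscMultilinear n A = mixedDisc A := by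
  simp only [mixedDiscMultilinear, mixedDisc, _root_.smul_apply, _root_.sum_apply, smul_eq_mul]
  congr! 2 with σ
  rw [← det_transpose]
  rfl

theorem mixedDisc_comp_perm (A : Fin n → Matrix (Fin n) (Fin n) ℂ) (τ : Equiv.Perm (Fin n)) :
    mixedDisc (A ∘ τ) = mixedDisc A :=
  congrArg ((n.factorial : ℂ)⁻¹ * ·) (Fintype.sum_equiv (Equiv.mulLeft τ) _ _ fun _ => rfl)

theorem mixedDisc_const (X : Matrix (Fin n) (Fin n) ℂ) : mixedDisc (fun _ => X) = X.det := by
  have hn : (n.factorial : ℂ) ≠ 0 := by exact_mod_cast n.factorial_ne_zero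
  have hX : (Matrix.of fun i j => X i j) = X := rfl
  simp [mixedDisc, Fintype.card_perm, hX, hn]

theorem sum_mixedDisc_update_const (X Y : Matrix (Fin n) (Fin n) ℂ) :
    ∑ i, mixedDisc (Function.update (fun _ => X) i Y) = (X.adjugate * Y).trace := by
  have hn : (n.factorial : ℂ) ≠ 0 := by exact_mod_cast n.factorial_ne_zero
  have hcol (σ : Equiv.Perm (Fin n)) (j : Fin n) :
      (Matrix.of fun k l => Function.update (fun _ => X) (σ j) Y (σ l) k l).det =
        (X.adjugate * Y) j j := by
    have hupd : (Matrix.of fun k l => Function.update (fun _ => X) (σ j) Y (σ l) k l) =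
        X.updateCol j (Y.col j) := by
      ext k l
      rcases eq_or_ne l j with rfl | hl
      · simp
      · simp [hl]
    rw [hupd, ← cramer_apply, cramer_eq_adjugate_mulVec]
    rfl
  simp only [mixedDisc, ← Finset.mul_sum]
  rw [Finset.sum_comm, Finset.sum_congr rfl fun σ _ => (Equiv.sum_comp σ _).symm]
  simp [hcol, Fintype.card_perm, trace, hn]

theorem star_mixedDisc (A : Fin n → Matrix (Fin n) (Fin n) ℂ) :
    star (mixedDisc A) = mixedDisc fun i => (A i)ᴴ := by
  simp only [mixedDisc, star_mul', star_sum, det_apply', star_prod, star_inv₀, star_natCast,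
    star_intCast, of_apply]
  congr 1
  rw [Finset.sum_comm]
  conv_rhs => rw [Finset.sum_comm]
  refine Fintype.sum_equiv (Equiv.inv _) _ _ fun τ =>
    Fintype.sum_equiv (Equiv.mulRight τ⁻¹) _ _ fun σ => ?_
  rw [Equiv.inv_apply, Equiv.Perm.sign_inv]
  congr 1
  exact Fintype.prod_equiv τ _ _ fun j => by simp

theorem ofReal_re_mixedDisc {A : Fin n → Matrix (Fin n) (Fin n) ℂ}
    (hA : ∀ i, (A i).IsHermitian) : ((mixedDisc A).re : ℂ) = mixedDisc A := by
  refine Complex.conj_eq_iff_re.1 ?_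
  rw [starRingEnd_apply, star_mixedDisc]
  simp only [(hA _).eq]

theorem continuous_mixedDisc :
    Continuous (mixedDisc : (Fin n → Matrix (Fin n) (Fin n) ℂ) → ℂ) :=
  continuous_const.mul (continuous_finsetSum _ fun σ _ =>
    Continuous.matrix_det (by fun_prop))

theorem mixedDisc_piecewise_ne_zero (hP : ∀ i, (P i).PosDef) (s : Finset (Fin n))
    {Z : Matrix (Fin n) (Fin n) ℂ} (hZ : Z ∈ upperHalfSpace (Fin n)) :
    mixedDisc (s.piecewise P fun _ => Z) ≠ 0 := by
  rw [← mixedDiscMultilinear_apply]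
  refine multilinearMap_piecewise_ne_zero (T := upperHalfSpace (Fin n)) (fun σ U => ?_)
    (fun Z hZ => ?_) (fun i Z hZ t ht => smul_add_mem_upperHalfSpace (hP i) hZ ht)
    (fun i => ⟨Complex.I, ?_⟩) s hZ
  · simp only [mixedDiscMultilinear_apply, mixedDisc_comp_perm]
  · simpa only [mixedDiscMultilinear_apply, mixedDisc_const]
      using det_ne_zero_of_mem_upperHalfSpace hZ
  · simpa using add_I_smul_mem_upperHalfSpace isHermitian_zero (hP i)

theorem mixedDisc_re_ne_zero (hP : ∀ i, (P i).PosDef) : (mixedDisc P).re ≠ 0 := by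
  have hI : (0 : Matrix (Fin n) (Fin n) ℂ) + Complex.I • 1 ∈ upperHalfSpace (Fin n) :=
    add_I_smul_mem_upperHalfSpace isHermitian_zero PosDef.one
  have h := mixedDisc_piecewise_ne_zero hP Finset.univ hI
  rw [Finset.piecewise_univ, ← ofReal_re_mixedDisc fun i => (hP i).isHermitian] at h
  exact_mod_cast h

theorem mixedDisc_re_pos (hP : ∀ i, (P i).PosDef) : 0 < (mixedDisc P).re := by
  let γ (t : ℝ) (i : Fin n) : Matrix (Fin n) (Fin n) ℂ := (1 - t) • 1 + t • P i
  have hγ (t : ℝ) (ht : t ∈ Set.Icc (0 : ℝ) 1) (i : Fin n) : (γ t i).PosDef := by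
    rcases ht.2.eq_or_lt with rfl | ht1
    · simpa [γ] using hP i
    · exact (PosDef.one.smul (sub_pos.2 ht1)).add_posSemidef ((hP i).posSemidef.smul ht.1)
  have hcont : Continuous fun t => (mixedDisc (γ t)).re :=
    Complex.continuous_re.comp (continuous_mixedDisc.comp (by fun_prop))
  by_contra! hle
  obtain ⟨t, ht, h0⟩ := intermediate_value_Icc' zero_le_one hcont.continuousOn
    ⟨by simpa [γ] using hle, by simp [γ, mixedDisc_const]⟩
  exact mixedDisc_re_ne_zero (hγ t ht) h0

end MixedDiscriminant

section MixedDiscriminantForm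

variable {n : ℕ}

theorem cons_update_comp_swap {M : Type*} (x y : M) (R : Fin n → M) (i : Fin n) :
    (Fin.cons x (Function.update R i y) : Fin (n + 1) → M) ∘ Equiv.swap 0 i.succ =
      Fin.cons y (Function.update R i x) := by
  ext j
  rcases Fin.eq_zero_or_eq_succ j with rfl | ⟨j, rfl⟩
  · simp [-Fin.cons_update]
  · rcases eq_or_ne j i with rfl | hj <;>
      simp [*, Equiv.swap_apply_of_ne_of_ne, -Fin.cons_update]

theorem mixedDisc_cons_update_comm (A B : Matrix (Fin (n + 1)) (Fin (n + 1)) ℂ)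
    (R : Fin n → Matrix (Fin (n + 1)) (Fin (n + 1)) ℂ) (i : Fin n) :
    mixedDisc (Fin.cons A (Function.update R i B)) =
      mixedDisc (Fin.cons B (Function.update R i A)) := by
  rw [← cons_update_comp_swap, mixedDisc_comp_perm]

theorem mixedDisc_cons_cons_comm (A B : Matrix (Fin (n + 2)) (Fin (n + 2)) ℂ)
    (R : Fin n → Matrix (Fin (n + 2)) (Fin (n + 2)) ℂ) :
    mixedDisc (Fin.cons A (Fin.cons B R)) = mixedDisc (Fin.cons B (Fin.cons A R)) := by
  simpa only [Fin.update_cons_zero] using mixedDisc_cons_update_comm A B (Fin.cons B R) 0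

theorem mixedDisc_cons_cons_update_comm (A B C : Matrix (Fin (n + 2)) (Fin (n + 2)) ℂ)
    (R : Fin n → Matrix (Fin (n + 2)) (Fin (n + 2)) ℂ) (i : Fin n) :
    mixedDisc (Fin.cons A (Fin.cons B (Function.update R i C))) =
      mixedDisc (Fin.cons A (Fin.cons C (Function.update R i B))) := by
  rw [mixedDisc_cons_cons_comm A B, Fin.cons_update, mixedDisc_cons_update_comm,
    ← Fin.cons_update, mixedDisc_cons_cons_comm]

theorem mixedDisc_add_cons (A A' : Matrix (Fin (n + 1)) (Fin (n + 1)) ℂ)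
    (R : Fin n → Matrix (Fin (n + 1)) (Fin (n + 1)) ℂ) :
    mixedDisc (Fin.cons (A + A') R) = mixedDisc (Fin.cons A R) + mixedDisc (Fin.cons A' R) := by
  simp only [← mixedDiscMultilinear_apply, MultilinearMap.cons_add]

theorem mixedDisc_smul_cons (c : ℂ) (A : Matrix (Fin (n + 1)) (Fin (n + 1)) ℂ)
    (R : Fin n → Matrix (Fin (n + 1)) (Fin (n + 1)) ℂ) :
    mixedDisc (Fin.cons (c • A) R) = c * mixedDisc (Fin.cons A R) := by
  simp only [← mixedDiscMultilinear_apply, MultilinearMap.cons_smul, smul_eq_mul]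

/-- The bilinear form `(X, Y) ↦ D(X, Y, R)` on Hermitian matrices. It is defined through the real
part, which loses nothing when `R` is Hermitian; see `ofReal_mixedDiscForm`. -/
noncomputable def mixedDiscForm (R : Fin n → Matrix (Fin (n + 2)) (Fin (n + 2)) ℂ) :
    LinearMap.BilinForm ℝ (HermitianMatrix (Fin (n + 2))) :=
  have add_left (X Y Z : HermitianMatrix (Fin (n + 2))) :
      (mixedDisc (Fin.cons (X + Y).1 (Fin.cons Z.1 R))).re =
        (mixedDisc (Fin.cons X.1 (Fin.cons Z.1 R))).re +
          (mixedDisc (Fin.cons Y.1 (Fin.cons Z.1 R))).re := by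
    rw [AddSubgroup.coe_add, mixedDisc_add_cons, Complex.add_re]
  have smul_left (c : ℝ) (X Z : HermitianMatrix (Fin (n + 2))) :
      (mixedDisc (Fin.cons (c • X).1 (Fin.cons Z.1 R))).re =
        c • (mixedDisc (Fin.cons X.1 (Fin.cons Z.1 R))).re := by
    rw [selfAdjoint.val_smul, ← Complex.coe_smul, mixedDisc_smul_cons, Complex.re_ofReal_mul,
      smul_eq_mul]
  LinearMap.mk₂ ℝ (fun X Y => (mixedDisc (Fin.cons X.1 (Fin.cons Y.1 R))).re) add_left smul_left
    (fun X Y Z => by simp only [mixedDisc_cons_cons_comm X.1, add_left])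
    (fun c X Z => by simp only [mixedDisc_cons_cons_comm X.1, smul_left])

variable {R T : Fin n → Matrix (Fin (n + 2)) (Fin (n + 2)) ℂ}

theorem mixedDiscForm_apply (X Y : HermitianMatrix (Fin (n + 2))) :
    mixedDiscForm R X Y = (mixedDisc (Fin.cons X.1 (Fin.cons Y.1 R))).re :=
  rfl

theorem isSymm_mixedDiscForm : (mixedDiscForm R).IsSymm :=
  ⟨fun X Y => congrArg Complex.re (mixedDisc_cons_cons_comm X.1 Y.1 R)⟩

theorem mixedDiscForm_update_apply (X Y Z : HermitianMatrix (Fin (n + 2)))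
    (i : Fin n) : mixedDiscForm (Function.update R i Y.1) X Z =
      mixedDiscForm (Function.update R i Z.1) X Y :=
  congrArg Complex.re (mixedDisc_cons_cons_update_comm X.1 Z.1 Y.1 R i)

theorem ofReal_mixedDiscForm (hR : ∀ i, (R i).IsHermitian)
    (X Y : HermitianMatrix (Fin (n + 2))) :
    (mixedDiscForm R X Y : ℂ) = mixedDisc (Fin.cons X.1 (Fin.cons Y.1 R)) :=
  ofReal_re_mixedDisc fun i => Fin.cases X.2 (fun i => Fin.cases Y.2 hR i) i

theorem mixedDisc_cons_cons_self_ne_zero (hR : ∀ i, (R i).PosDef)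
    {Z : Matrix (Fin (n + 2)) (Fin (n + 2)) ℂ} (hZ : Z ∈ upperHalfSpace (Fin (n + 2))) :
    mixedDisc (Fin.cons Z (Fin.cons Z R)) ≠ 0 := by
  have h := mixedDisc_piecewise_ne_zero (P := Fin.cons 1 (Fin.cons 1 R))
    (fun i => Fin.cases PosDef.one (fun i => Fin.cases PosDef.one hR i) i) {0, 1}ᶜ hZ
  convert h using 2
  ext1 j
  refine Fin.cases (by simp) (fun j => Fin.cases (by simp) (fun j => ?_) j) j
  rw [Finset.piecewise_eq_of_mem _ _ _ (by simp [Fin.ext_iff])]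
  simp

theorem mixedDisc_cons_cons_add_I_smul_self (hR : ∀ i, (R i).IsHermitian)
    (X Y : HermitianMatrix (Fin (n + 2))) :
    mixedDisc (Fin.cons (X.1 + Complex.I • Y.1) (Fin.cons (X.1 + Complex.I • Y.1) R)) =
      (mixedDiscForm R X X - mixedDiscForm R Y Y : ℝ) + 2 * mixedDiscForm R X Y * Complex.I := by
  have hexp (W : Matrix (Fin (n + 2)) (Fin (n + 2)) ℂ) :
      mixedDisc (Fin.cons (X.1 + Complex.I • Y.1) (Fin.cons W R)) =
        mixedDisc (Fin.cons X.1 (Fin.cons W R)) +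
          Complex.I * mixedDisc (Fin.cons Y.1 (Fin.cons W R)) := by
    rw [mixedDisc_add_cons, mixedDisc_smul_cons]
  rw [hexp, mixedDisc_cons_cons_comm X.1, mixedDisc_cons_cons_comm Y.1, hexp, hexp,
    mixedDisc_cons_cons_comm Y.1 X.1, Complex.ofReal_sub, ofReal_mixedDiscForm hR,
    ofReal_mixedDiscForm hR, ofReal_mixedDiscForm hR]
  linear_combination mixedDisc (Fin.cons Y.1 (Fin.cons Y.1 R)) * Complex.I_sq

theorem isLorentzianAt_mixedDiscForm (hR : ∀ i, (R i).PosDef)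
    {A : HermitianMatrix (Fin (n + 2))} (hA : A.1.PosDef) :
    IsLorentzianAt (mixedDiscForm R) A := by
  have hAA : 0 < mixedDiscForm R A A :=
    mixedDisc_re_pos fun i => Fin.cases hA (fun i => Fin.cases hA hR i) i
  refine ⟨hAA, fun X hX => ?_⟩
  by_contra! hXX
  set τ := √(mixedDiscForm R X X / mixedDiscForm R A A)
  have hτ_sq : τ ^ 2 * mixedDiscForm R A A = mixedDiscForm R X X := by
    rw [Real.sq_sqrt (by positivity), div_mul_cancel₀ _ hAA.ne']
  have hmem : X.1 + Complex.I • (τ • A).1 ∈ upperHalfSpace (Fin (n + 2)) :=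
    add_I_smul_mem_upperHalfSpace X.2 (hA.smul (by positivity))
  refine mixedDisc_cons_cons_self_ne_zero hR hmem ?_
  have hXA : mixedDiscForm R X A = 0 := isSymm_mixedDiscForm.eq_iff.1 hX
  have hXτ : mixedDiscForm R X (τ • A) = 0 := by rw [map_smul, hXA, smul_zero]
  have hττ : mixedDiscForm R (τ • A) (τ • A) = mixedDiscForm R X X := by
    rw [map_smul, LinearMap.map_smul₂, smul_smul, ← sq, smul_eq_mul, hτ_sq]
  rw [mixedDisc_cons_cons_add_I_smul_self fun i => (hR i).isHermitian, hXτ, hττ]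
  simp

theorem ker_mixedDiscForm_le_update (hR : ∀ i, (R i).PosDef) (i : Fin n)
    {Y : Matrix (Fin (n + 2)) (Fin (n + 2)) ℂ} (hY : Y.PosDef) :
    LinearMap.ker (mixedDiscForm R) ≤
      LinearMap.ker (mixedDiscForm (Function.update R i Y)) := by
  intro X hX
  obtain ⟨P, hP⟩ : ∃ P : HermitianMatrix (Fin (n + 2)), P.1 = R i :=
    ⟨⟨R i, (hR i).isHermitian⟩, rfl⟩
  lift Y to HermitianMatrix (Fin (n + 2)) using hY.isHermitian
  have hXP (Z : HermitianMatrix (Fin (n + 2))) :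
      mixedDiscForm (Function.update R i Z.1) X P = 0 := by
    rw [mixedDiscForm_update_apply, hP, Function.update_eq_self, LinearMap.mem_ker.1 hX,
      LinearMap.zero_apply]
  have hPX (Z : HermitianMatrix (Fin (n + 2))) :
      mixedDiscForm (Function.update R i Z.1) P X = 0 := isSymm_mixedDiscForm.eq_iff.1 (hXP Z)
  have hlor {Z : HermitianMatrix (Fin (n + 2))} (hZ : Z.1.PosDef) :
      IsLorentzianAt (mixedDiscForm (Function.update R i Z.1)) P :=
    isLorentzianAt_mixedDiscForm
      ((Function.forall_update_iff R fun _ M => M.PosDef).2 ⟨hZ, fun j _ => hR j⟩) (hP ▸ hR i)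
  have hzero : mixedDiscForm (Function.update R i X.1) X = 0 := by
    refine linearMap_eq_zero_of_forall_posDef_nonpos (P := P) (fun Z hZ => ?_) (hP ▸ hR i) (hXP X)
    rw [mixedDiscForm_update_apply]
    exact (hlor hZ).apply_self_nonpos X (hPX Z)
  refine (hlor hY).mem_ker_of_apply_self_eq_zero isSymm_mixedDiscForm (hPX Y) ?_
  rw [mixedDiscForm_update_apply, hzero, LinearMap.zero_apply]

theorem ker_mixedDiscForm_le (hR : ∀ i, (R i).PosDef) (hT : ∀ i, (T i).PosDef) :
    LinearMap.ker (mixedDiscForm R) ≤ LinearMap.ker (mixedDiscForm T) := by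
  suffices h : ∀ s : Finset (Fin n),
      LinearMap.ker (mixedDiscForm R) ≤ LinearMap.ker (mixedDiscForm (s.piecewise T R)) by
    simpa using h Finset.univ
  intro s
  induction s using Finset.induction_on with
  | empty => simp
  | insert a s _ ih =>
    rw [Finset.piecewise_insert]
    exact ih.trans <| ker_mixedDiscForm_le_update
      (fun i => s.piecewise_cases T R PosDef (hT i) (hR i)) a (hT a)

theorem ker_mixedDiscForm_eq_bot (hR : ∀ i, (R i).PosDef) :
    LinearMap.ker (mixedDiscForm R) = ⊥ := by
  refine (Submodule.eq_bot_iff _).2 fun X hX => Subtype.ext ?_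
  refine eq_zero_of_forall_posDef_trace_adjugate_mul_eq_zero X.2 fun S hS => ?_
  rw [← sum_mixedDisc_update_const]
  refine Finset.sum_eq_zero fun i _ => ?_
  have hcons : Function.update (fun _ : Fin (n + 2) => S) 0 X.1 =
      Fin.cons X.1 (Fin.cons S fun _ => S : Fin (n + 1) → _) := by
    ext1 j
    refine Fin.cases (by simp) (fun j => Fin.cases (by simp) (fun j => ?_) j) j
    simp
  have hswap := update_comp_swap_of_apply_eq (U := fun _ => S) (i := i) (j := 0) rfl X.1
  have hker : mixedDiscForm (fun _ => S) X = 0 := ker_mixedDiscForm_le hR (fun _ => hS) hX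
  rw [← mixedDisc_comp_perm _ (Equiv.swap i 0), hswap, hcons,
    ← ofReal_mixedDiscForm (fun _ => hS.isHermitian) X ⟨S, hS.isHermitian⟩, hker]
  simp

end MixedDiscriminantForm

theorem af_mixedDisc_posDef_general (n : ℕ)
    (A B : Matrix (Fin (n + 2)) (Fin (n + 2)) ℂ)
    (rest : Fin n → Matrix (Fin (n + 2)) (Fin (n + 2)) ℂ)
    (hA : A.IsHermitian) (hAA : 0 < (mixedDisc (Fin.cons A (Fin.cons A rest))).re)
    (hrest : ∀ i, (rest i).PosDef) (hB : B.IsHermitian) :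
    (mixedDisc (Fin.cons A (Fin.cons B rest))).re ^ 2 ≥
        (mixedDisc (Fin.cons A (Fin.cons A rest))).re *
          (mixedDisc (Fin.cons B (Fin.cons B rest))).re ∧
      ((mixedDisc (Fin.cons A (Fin.cons B rest))).re ^ 2 =
          (mixedDisc (Fin.cons A (Fin.cons A rest))).re *
            (mixedDisc (Fin.cons B (Fin.cons B rest))).re ↔
        ∃ l : ℝ, B = l • A) := by
  lift A to HermitianMatrix (Fin (n + 2)) using hA
  lift B to HermitianMatrix (Fin (n + 2)) using hB
  have hlor : IsLorentzianAt (mixedDiscForm rest) A :=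
    (isLorentzianAt_mixedDiscForm hrest (A := 1) PosDef.one).of_apply_self_pos
      isSymm_mixedDiscForm hAA
  simp only [← mixedDiscForm_apply, ← selfAdjoint.val_smul, Subtype.val_inj]
  exact ⟨hlor.mul_apply_self_le_sq isSymm_mixedDiscForm B,
    hlor.sq_eq_mul_apply_self_iff isSymm_mixedDiscForm (ker_mixedDiscForm_eq_bot hrest)⟩

/-- complex Alexandrov–Fenchel inequality for mixed discriminants, with the
equality case: for Hermitian matrices `A, B, A₃, …, Aₙ` with `A, A₃, …, Aₙ` positive
definite and `B` arbitrary Hermitian,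
`D(A,B,A₃,…,Aₙ)² ≥ D(A,A,A₃,…,Aₙ)·D(B,B,A₃,…,Aₙ)`, with equality iff `B = λA`, `λ ∈ ℝ`.
(Mixed discriminants of Hermitian matrices are real, so we compare real parts.) -/
theorem af_mixedDisc_posDef (n : ℕ)
    (A B : Matrix (Fin (n + 2)) (Fin (n + 2)) ℂ)
    (rest : Fin n → Matrix (Fin (n + 2)) (Fin (n + 2)) ℂ)
    (hA : A.PosDef) (hrest : ∀ i, (rest i).PosDef) (hB : B.IsHermitian) :
    (mixedDisc (Fin.cons A (Fin.cons B rest))).re ^ 2 ≥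
        (mixedDisc (Fin.cons A (Fin.cons A rest))).re *
          (mixedDisc (Fin.cons B (Fin.cons B rest))).re ∧
      ((mixedDisc (Fin.cons A (Fin.cons B rest))).re ^ 2 =
          (mixedDisc (Fin.cons A (Fin.cons A rest))).re *
            (mixedDisc (Fin.cons B (Fin.cons B rest))).re ↔
        ∃ l : ℝ, B = l • A) := by
  exact af_mixedDisc_posDef_general n A B rest hA.isHermitian
    (mixedDisc_re_pos fun i => Fin.cases hA (fun i => Fin.cases hA hrest i) i) hrest hB
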